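/- For each fixed integer k ≥ 1, the sequence n ↦ c(n, n+2−k) satisfies the asymptotic equivalence c(n, n+2−k) ~ 4^n·n^{(2k−5)/2} / (2^{k−1}·(k−1)!·√π) as n → ∞; that is, the ratio of the two sides tends to 1. -/

import Mathlib

/-!
Index contexts by their number `m` of missing holes: `defect m n = c n (n + 1 - m)`, with
generating function `D_m`. The recursion for `c` becomes
`D_m = [m = 0] + X * ∑_{l < m} W_{m,l} + X * ∑_{a + b = m} D_a D_b`, where `W_{m,l}` is `D_l` with
coefficients multiplied by a binomial weight `choose (n + 1 - l) (m - 1 - l)`, polynomial in `n` of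
degree `m - 1 - l`.

For `m = 0` this is the Catalan equation, so `1 - 2 X D_0 = (1 - 4X)^(1/2)`, whose inverse `cb` is
the generating function of the central binomial coefficients. Hence for `m ≥ 1`
`D_m = cb * X * (∑_{l < m} W_{m,l} + ∑_{a + b = m, a, b ≥ 1} D_a D_b)`.
Measuring growth by comparison of coefficients with powers of `cb` (the predicate `Dom`), an
induction on `q` gives `D_{q+1} = lead q * cb^(2q+1) + O(cb^(2q))` (`defectSeries_main`). The weighted
terms are of lower order, because a weight of degree `r` costs only a factor `cb^(2r)`, so the
leading coefficients obey the Catalan recursion coming from the quadratic term alone (at the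
singularity `X = 1/4`), with solution `lead q = catalan q / (2 * 8^q)`.

The coefficients of `cb^N` are asymptotic to a constant times `4^n n^(N/2 - 1)`: the differential
equation `cb' = 2 cb^3` passes from `N` to `N + 2`, and the initial cases are `cb^2 = 1 / (1 - 4X)` and
the central binomial coefficients, treated with the Wallis product. The remainder
`O(cb^(2q))` is thus smaller than the main term by a factor of order `n^(-1/2)`.
-/

/-- `c n i` counts `i`-contexts (closed λ-terms with `i` holes) of size `n`. -/
def c : ℕ → ℕ → ℕ
  | 0, i => if i = 1 then 1 else 0
  | n+1, i => (∑ j ∈ Finset.Icc i (n+1), Nat.choose j i * c n j)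
      + ∑ j ∈ Finset.range (i+1), ∑ k ∈ (Finset.range (n+1)).attach,
          c k.1 j * c (n - k.1) (i - j)
termination_by n _ => n
decreasing_by
  · exact Nat.lt_succ_self n
  · exact Finset.mem_range.mp k.2
  · exact Nat.lt_succ_of_le (Nat.sub_le n k.1)

open Filter

/-! ### The recursion by number of missing holes -/

/-- The number of contexts of size `n` having `m` holes fewer than the maximum `n + 1`; the case
distinction prevents truncated subtraction from counting `c n 0` for `m > n + 1`. -/
def defect (m n : ℕ) : ℕ := if m ≤ n + 1 then c n (n + 1 - m) else 0

lemma c_succ (n i : ℕ) : c (n+1) i = (∑ j ∈ Finset.Icc i (n+1), Nat.choose j i * c n j)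
      + ∑ j ∈ Finset.range (i+1), ∑ k ∈ Finset.range (n+1), c k j * c (n - k) (i - j) := by
  rw [c]
  congr 1
  refine Finset.sum_congr rfl fun j _ => ?_
  exact Finset.sum_attach (Finset.range (n+1)) (fun k => c k j * c (n - k) (i - j))

lemma c_zero (i : ℕ) : c 0 i = if i = 1 then 1 else 0 := by rw [c]

/-- A context of size `n` has at most `n + 1` holes. -/
lemma c_eq_zero (n : ℕ) : ∀ i, n + 1 < i → c n i = 0 := by
  induction n using Nat.strong_induction_on with
  | _ n ih =>
    intro i hi
    rcases n with _ | n
    · rw [c_zero, if_neg (by omega)]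
    · rw [c_succ, Finset.Icc_eq_empty (by omega), Finset.sum_empty, zero_add]
      refine Finset.sum_eq_zero fun j hj => Finset.sum_eq_zero fun k hk => ?_
      rw [Finset.mem_range] at hj hk
      by_cases h : k + 1 < j
      · rw [ih k (by omega) j h, zero_mul]
      · rw [ih (n - k) (by omega) (i - j) (by omega), mul_zero]

lemma c_eq_defect {n i : ℕ} (h : i ≤ n + 1) : c n i = defect (n + 1 - i) n := by
  unfold defect
  rw [if_pos (by omega)]
  congr 1
  omega

lemma defect_eq_zero {m n : ℕ} (h : n + 1 < m) : defect m n = 0 := by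
  unfold defect
  rw [if_neg (by omega)]

lemma defect_zero (m : ℕ) : defect m 0 = if m = 0 then 1 else 0 := by
  unfold defect
  rw [c_zero]
  split_ifs <;> first | rfl | omega

/-- Convolution over numbers of holes is convolution over numbers of missing holes: the nonzero
terms correspond under `j ↦ p + 1 - j`. -/
lemma conv_eq {p q i m : ℕ} (h : i + m = p + q + 2) :
    ∑ j ∈ Finset.range (i+1), c p j * c q (i - j)
      = ∑ x ∈ Finset.HasAntidiagonal.antidiagonal m, defect x.1 p * defect x.2 q := by
  refine Finset.sum_bij_ne_zero (fun j _ _ => (p + 1 - j, q + 1 - (i - j))) ?_ ?_ ?_ ?_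
  · intro j hj hne
    rw [Finset.mem_range] at hj
    have h1 : ¬ p + 1 < j := fun h => hne (by rw [c_eq_zero p j h, zero_mul])
    have h2 : ¬ q + 1 < i - j := fun h => hne (by rw [c_eq_zero q _ h, mul_zero])
    rw [Finset.HasAntidiagonal.mem_antidiagonal]
    dsimp only
    omega
  · intro j hj hne j' hj' hne' heq
    have h1 : ¬ p + 1 < j := fun h => hne (by rw [c_eq_zero p j h, zero_mul])
    have h2 : ¬ p + 1 < j' := fun h => hne' (by rw [c_eq_zero p j' h, zero_mul])
    rw [Prod.mk.injEq] at heq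
    omega
  · rintro ⟨a, b⟩ hab hne
    rw [Finset.HasAntidiagonal.mem_antidiagonal] at hab
    dsimp only at hab hne
    have h1 : ¬ p + 1 < a := fun h => hne (by rw [defect_eq_zero h, zero_mul])
    have h2 : ¬ q + 1 < b := fun h => hne (by rw [defect_eq_zero h, mul_zero])
    refine ⟨p + 1 - a, by rw [Finset.mem_range]; omega, ?_, ?_⟩
    · rw [c_eq_defect (by omega), c_eq_defect (by omega)]
      convert hne using 3 <;> omega
    · rw [Prod.mk.injEq]; omega
  · intro j hj hne
    have h1 : ¬ p + 1 < j := fun h => hne (by rw [c_eq_zero p j h, zero_mul])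
    have h2 : ¬ q + 1 < i - j := fun h => hne (by rw [c_eq_zero q _ h, mul_zero])
    rw [c_eq_defect (by omega), c_eq_defect (by omega)]

/-- The recursion in terms of missing holes; it holds for every `m`, since for `m > n + 2` each
term on the right contains a vanishing binomial coefficient or `defect`. -/
lemma defect_succ (m n : ℕ) : defect m (n + 1) =
    ∑ l ∈ Finset.range m, Nat.choose (n + 1 - l) (m - 1 - l) * defect l n
      + ∑ y ∈ Finset.HasAntidiagonal.antidiagonal n, ∑ x ∈ Finset.HasAntidiagonal.antidiagonal m,
          defect x.1 y.1 * defect x.2 y.2 := by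
  by_cases hm : m ≤ n + 2
  · have hd : defect m (n + 1) = c (n + 1) (n + 2 - m) := if_pos hm
    rw [hd, c_succ]
    congr 1
    · refine Finset.sum_nbij' (fun j => n + 1 - j) (fun l => n + 1 - l) ?_ ?_ ?_ ?_ ?_
      · intro j hj; rw [Finset.mem_Icc] at hj; rw [Finset.mem_range]; omega
      · intro l hl; rw [Finset.mem_range] at hl; rw [Finset.mem_Icc]; omega
      · intro j hj; rw [Finset.mem_Icc] at hj; omega
      · intro l hl; rw [Finset.mem_range] at hl; omega
      · intro j hj
        rw [Finset.mem_Icc] at hj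
        rw [c_eq_defect hj.2, show n + 1 - (n + 1 - j) = j by omega,
          ← Nat.choose_symm hj.1]
        congr 2
        omega
    · rw [Finset.sum_comm, Finset.Nat.sum_antidiagonal_eq_sum_range_succ_mk]
      refine Finset.sum_congr rfl fun k hk => ?_
      rw [Finset.mem_range] at hk
      exact conv_eq (by omega)
  · rw [defect_eq_zero (by omega), eq_comm, Nat.add_eq_zero_iff]
    constructor
    · refine Finset.sum_eq_zero fun l hl => ?_
      rw [Finset.mem_range] at hl
      by_cases h : n + 1 < l
      · rw [defect_eq_zero h, mul_zero]
      · rw [Nat.choose_eq_zero_of_lt (by omega), zero_mul]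
    · refine Finset.sum_eq_zero fun y hy => Finset.sum_eq_zero fun x hx => ?_
      rw [Finset.HasAntidiagonal.mem_antidiagonal] at hy hx
      by_cases h : y.1 + 1 < x.1
      · rw [defect_eq_zero h, zero_mul]
      · rw [defect_eq_zero (m := x.2) (by omega), mul_zero]

lemma defect_zero_left (n : ℕ) : defect 0 n = catalan n := by
  induction n using Nat.strong_induction_on with
  | _ n ih =>
    rcases n with _ | n
    · simp [defect_zero]
    · rw [defect_succ, catalan_succ']
      simp only [Finset.range_zero, Finset.sum_empty, zero_add, Finset.Nat.antidiagonal_zero,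
        Finset.sum_singleton]
      refine Finset.sum_congr rfl fun y hy => ?_
      rw [Finset.HasAntidiagonal.mem_antidiagonal] at hy
      rw [ih _ (by omega), ih _ (by omega)]

/-! ### Generating functions and the inverse square root of `1 - 4X` -/

open PowerSeries

/-- The generating function `∑ defect m n * X ^ n`. -/
noncomputable def defectSeries (m : ℕ) : ℝ⟦X⟧ := mk fun n => (defect m n : ℝ)

/-- The generating function `(1 - 4X)^(-1/2)` of the central binomial coefficients. -/
noncomputable def cb : ℝ⟦X⟧ := mk fun n => (Nat.centralBinom n : ℝ)

lemma coeff_cb (n : ℕ) : coeff n cb = (Nat.centralBinom n : ℝ) := by simp [cb]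

lemma coeff_defectSeries (m n : ℕ) : coeff n (defectSeries m) = (defect m n : ℝ) := by
  simp [defectSeries]

lemma defectSeries_eq (m : ℕ) : defectSeries m = (if m = 0 then 1 else 0)
    + X * ∑ l ∈ Finset.range m,
        mk (fun n => (Nat.choose (n + 1 - l) (m - 1 - l) : ℝ) * coeff n (defectSeries l))
    + X * ∑ x ∈ Finset.HasAntidiagonal.antidiagonal m, defectSeries x.1 * defectSeries x.2 := by
  ext n
  rcases n with _ | n
  · simp only [coeff_defectSeries, defect_zero, map_add, coeff_zero_X_mul, add_zero]
    split_ifs <;> simp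
  · have h1 : coeff (n + 1) (if m = 0 then 1 else 0 : ℝ⟦X⟧) = 0 := by
      split_ifs <;> simp [coeff_one]
    rw [map_add, map_add, h1, zero_add, coeff_succ_X_mul, coeff_succ_X_mul]
    simp only [map_sum, coeff_mk, coeff_mul, coeff_defectSeries, defect_succ]
    push_cast
    rw [Finset.sum_comm (s := Finset.HasAntidiagonal.antidiagonal n)]

/-- `1 - 2 X D₀` is a square root of `1 - 4X`: complete the square in `D₀ = 1 + X D₀²`. -/
lemma sqrt_sq : (1 - 2 * X * defectSeries 0) ^ 2 = 1 - 4 * X := by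
  have h := defectSeries_eq 0
  simp only [Finset.range_zero, Finset.sum_empty, Finset.Nat.antidiagonal_zero,
    Finset.sum_singleton, if_true, mul_zero, add_zero] at h
  linear_combination (-4 * X) * h

lemma derivative_X_mul_defectSeries_zero : derivative ℝ (X * defectSeries 0) = cb := by
  ext n
  rw [coeff_derivative, coeff_succ_X_mul, coeff_defectSeries, defect_zero_left, coeff_cb,
    ← succ_mul_catalan_eq_centralBinom]
  push_cast
  ring

/-- Differentiate `(1 - 2 X D₀)² = 1 - 4X`, using `(X D₀)' = cb`. -/
lemma sqrt_mul_cb : (1 - 2 * X * defectSeries 0) * cb = 1 := by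
  have h := congrArg (derivative ℝ) sqrt_sq
  have h2 : (1 - 2 * X * defectSeries 0) ^ 2 =
    1 - (4 : ℝ) • (X * defectSeries 0) + (4 : ℝ) • (X * defectSeries 0) ^ 2 := by
    simp only [smul_eq_C_mul, map_ofNat]
    ring
  have h3 : (1 - 4 * X : ℝ⟦X⟧) = 1 - (4 : ℝ) • X := by
    simp only [smul_eq_C_mul, map_ofNat]
  rw [h2, h3] at h
  simp only [map_add, map_sub, Derivation.map_smul, derivative_one, derivative_pow,
    derivative_X_mul_defectSeries_zero, derivative_X] at h
  simp only [smul_eq_C_mul, map_ofNat] at h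
  have h4 : (4 : ℝ⟦X⟧) * ((1 - 2 * X * defectSeries 0) * cb) = 4 * 1 := by
    push_cast at h
    linear_combination -h
  have h5 : (4 : ℝ⟦X⟧) ≠ 0 := by
    rw [← map_ofNat (C (R := ℝ)) 4]
    simp
  exact mul_left_cancel₀ h5 h4

lemma four_X_mul_cb_pow (N : ℕ) : 4 * X * cb ^ (N + 2) = cb ^ (N + 2) - cb ^ N := by
  have h : (1 - 4 * X) * cb ^ 2 = 1 := by
    rw [← sqrt_sq, ← mul_pow, sqrt_mul_cb, one_pow]
  linear_combination (-cb ^ N) * h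

lemma derivative_cb : derivative ℝ cb = 2 * cb ^ 3 := by
  have h := congrArg (derivative ℝ) sqrt_mul_cb
  have h2 : (1 - 2 * X * defectSeries 0) * cb = cb - (2 : ℝ) • (X * defectSeries 0 * cb) := by
    simp only [smul_eq_C_mul, map_ofNat]
    ring
  rw [h2] at h
  simp only [map_sub, Derivation.map_smul, derivative_one, Derivation.leibniz (derivative ℝ) (X * _),
    derivative_X_mul_defectSeries_zero] at h
  simp only [smul_eq_C_mul, map_ofNat, smul_eq_mul] at h
  linear_combination cb * h - derivative ℝ cb * sqrt_mul_cb

lemma coeff_succ_cb_pow (N n : ℕ) :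
    ((n : ℝ) + 1) * coeff (n + 1) (cb ^ N) = 2 * N * coeff n (cb ^ (N + 2)) := by
  have h := coeff_derivative (cb ^ N) n
  rw [derivative_pow, derivative_cb] at h
  rw [mul_comm, ← h]
  rcases N with _ | N
  · simp
  · have : ((N + 1 : ℕ) : ℝ⟦X⟧) * cb ^ (N + 1 - 1) * (2 * cb ^ 3)
        = C (2 * ((N + 1 : ℕ) : ℝ)) * cb ^ (N + 1 + 2) := by
      rw [map_mul, map_ofNat, map_natCast, Nat.add_sub_cancel]
      ring
    rw [this, coeff_C_mul]

lemma coeff_cb_pow_nonneg (N n : ℕ) : 0 ≤ coeff n (cb ^ N) := by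
  induction N generalizing n with
  | zero => rw [pow_zero, coeff_one]; split_ifs <;> norm_num
  | succ N ih =>
    rw [pow_succ, coeff_mul]
    refine Finset.sum_nonneg fun x _ => mul_nonneg (ih _) ?_
    rw [coeff_cb]
    positivity

lemma coeff_cb_pow_le_succ (N n : ℕ) : coeff n (cb ^ N) ≤ coeff n (cb ^ (N + 1)) := by
  rw [pow_succ, coeff_mul]
  have h : coeff n (cb ^ N) = coeff n (cb ^ N) * coeff 0 cb := by simp [coeff_cb]
  rw [h]
  refine Finset.single_le_sum (f := fun x : ℕ × ℕ => coeff x.1 (cb ^ N) * coeff x.2 cb)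
    (a := (n, 0)) (fun x _ => mul_nonneg (coeff_cb_pow_nonneg _ _) ?_) (by simp)
  rw [coeff_cb]
  positivity

/-! ### Coefficientwise domination by powers of `cb` -/

/-- `Dom N f`: the coefficients of `f` are `O` of those of `(1 - 4X)^(-N/2)`, so that (for `N > 0`)
they are `O(4 ^ n * n ^ (N / 2 - 1))`. -/
def Dom (N : ℕ) (f : ℝ⟦X⟧) : Prop :=
  ∃ K : ℝ, 0 ≤ K ∧ ∀ n, |coeff n f| ≤ K * coeff n (cb ^ N)

lemma Dom.succ {N : ℕ} {f : ℝ⟦X⟧} (h : Dom N f) : Dom (N + 1) f := by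
  obtain ⟨K, hK, h⟩ := h
  exact ⟨K, hK, fun n => (h n).trans
    (mul_le_mul_of_nonneg_left (coeff_cb_pow_le_succ N n) hK)⟩

lemma Dom.add {N : ℕ} {f g : ℝ⟦X⟧} (hf : Dom N f) (hg : Dom N g) : Dom N (f + g) := by
  obtain ⟨K, hK, h⟩ := hf
  obtain ⟨L, hL, h'⟩ := hg
  refine ⟨K + L, by positivity, fun n => ?_⟩
  rw [map_add, add_mul]
  exact (abs_add_le _ _).trans (add_le_add (h n) (h' n))

lemma Dom.zero (N : ℕ) : Dom N 0 := ⟨0, le_rfl, fun n => by simp⟩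

lemma Dom.sum {ι : Type*} {N : ℕ} (s : Finset ι) (f : ι → ℝ⟦X⟧) (h : ∀ i ∈ s, Dom N (f i)) :
    Dom N (∑ i ∈ s, f i) :=
  Finset.sum_induction f (Dom N) (fun _ _ => Dom.add) (Dom.zero N) h

lemma Dom.mul {N M : ℕ} {f g : ℝ⟦X⟧} (hf : Dom N f) (hg : Dom M g) : Dom (N + M) (f * g) := by
  obtain ⟨K, hK, h⟩ := hf
  obtain ⟨L, hL, h'⟩ := hg
  refine ⟨K * L, by positivity, fun n => ?_⟩
  rw [coeff_mul, pow_add, coeff_mul, Finset.mul_sum]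
  refine (Finset.abs_sum_le_sum_abs _ _).trans (Finset.sum_le_sum fun x _ => ?_)
  rw [abs_mul, mul_mul_mul_comm]
  exact mul_le_mul (h _) (h' _) (abs_nonneg _) (mul_nonneg hK (coeff_cb_pow_nonneg _ _))

lemma Dom.cb_pow (N : ℕ) : Dom N (cb ^ N) :=
  ⟨1, zero_le_one, fun n => by rw [one_mul, abs_of_nonneg (coeff_cb_pow_nonneg _ _)]⟩

lemma Dom.C (a : ℝ) : Dom 0 (C a) := by
  refine ⟨|a|, abs_nonneg a, fun n => ?_⟩
  rw [pow_zero, coeff_C, coeff_one]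
  split_ifs <;> simp

lemma Dom.C_mul {N : ℕ} {f : ℝ⟦X⟧} (a : ℝ) (h : Dom N f) : Dom N (PowerSeries.C a * f) := by
  simpa using (Dom.C a).mul h

lemma X_mul_cb_pow (N : ℕ) :
    X * cb ^ (N + 2) = C (1 / 4 : ℝ) * cb ^ (N + 2) + C (-1 / 4 : ℝ) * cb ^ N := by
  have h4 : (C (1 / 4 : ℝ) : ℝ⟦X⟧) * 4 = 1 := by
    rw [← map_ofNat (C (R := ℝ)) 4, ← map_mul]
    norm_num
  have hn : (C (-1 / 4 : ℝ) : ℝ⟦X⟧) = - C (1 / 4 : ℝ) := by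
    rw [← map_neg]; norm_num
  rw [hn]
  linear_combination (C (1 / 4 : ℝ) : ℝ⟦X⟧) * four_X_mul_cb_pow N - X * cb ^ (N + 2) * h4

/-- Multiplication by `X` keeps the order of growth if `N > 0`. -/
lemma Dom.X_mul {N : ℕ} {f : ℝ⟦X⟧} (h : Dom (N + 1) f) : Dom (N + 1) (X * f) := by
  obtain ⟨K, hK, h⟩ := h
  refine ⟨K, hK, fun n => ?_⟩
  rcases n with _ | n
  · simpa using mul_nonneg hK (coeff_cb_pow_nonneg (N + 1) 0)
  · rw [coeff_succ_X_mul]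
    refine (h n).trans (mul_le_mul_of_nonneg_left ?_ hK)
    rw [pow_succ', coeff_mul, coeff_mul, Finset.Nat.sum_antidiagonal_succ]
    have : ∑ p ∈ Finset.HasAntidiagonal.antidiagonal n, coeff p.1 cb * coeff p.2 (cb ^ N) ≤
        ∑ p ∈ Finset.HasAntidiagonal.antidiagonal n, coeff (p.1 + 1) cb * coeff p.2 (cb ^ N) := by
      refine Finset.sum_le_sum fun p _ =>
        mul_le_mul_of_nonneg_right ?_ (coeff_cb_pow_nonneg _ _)
      rw [coeff_cb, coeff_cb]
      exact_mod_cast Nat.centralBinom_strictMono.monotone (Nat.le_succ _)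
    refine this.trans (le_add_of_nonneg_left (mul_nonneg ?_ (coeff_cb_pow_nonneg _ _)))
    rw [coeff_cb]
    positivity

lemma Dom.succ_weight {N : ℕ} {f : ℝ⟦X⟧} (h : Dom N f) :
    Dom (N + 2) (mk fun n => ((n : ℝ) + 1) * coeff n f) := by
  obtain ⟨K, hK, h⟩ := h
  refine ⟨K * (2 * N + 1), by positivity, fun n => ?_⟩
  rw [coeff_mk, abs_mul, abs_of_nonneg (by positivity)]
  have h1 : (n : ℝ) * coeff n (cb ^ N) ≤ 2 * N * coeff n (cb ^ (N + 2)) := by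
    rcases n with _ | n
    · simpa using mul_nonneg (by positivity : (0 : ℝ) ≤ 2 * N) (coeff_cb_pow_nonneg (N + 2) 0)
    · push_cast
      rw [coeff_succ_cb_pow]
      refine mul_le_mul_of_nonneg_left ?_ (by positivity)
      have h2 := congrArg (coeff (n + 1)) (X_mul_cb_pow N)
      rw [coeff_succ_X_mul, map_add, coeff_C_mul, coeff_C_mul] at h2
      have := coeff_cb_pow_nonneg N (n + 1)
      have := coeff_cb_pow_nonneg (N + 2) (n + 1)
      linarith
  have h2 : coeff n (cb ^ N) ≤ coeff n (cb ^ (N + 2)) :=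
    (coeff_cb_pow_le_succ N n).trans (coeff_cb_pow_le_succ (N + 1) n)
  calc ((n : ℝ) + 1) * |coeff n f| ≤ (n + 1) * (K * coeff n (cb ^ N)) := by
        gcongr
        exact h n
    _ = K * (n * coeff n (cb ^ N) + coeff n (cb ^ N)) := by ring
    _ ≤ K * (2 * N * coeff n (cb ^ (N + 2)) + coeff n (cb ^ (N + 2))) := by gcongr
    _ = _ := by ring

/-- A weight of polynomial growth of degree `r` raises the order by `2 * r`. -/
lemma Dom.weight {N : ℕ} {f : ℝ⟦X⟧} (h : Dom N f) (r : ℕ) (w : ℕ → ℝ)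
    (hw : ∀ n, |w n| ≤ ((n : ℝ) + 1) ^ r) : Dom (N + 2 * r) (mk fun n => w n * coeff n f) := by
  have key : Dom (N + 2 * r) (mk fun n => ((n : ℝ) + 1) ^ r * coeff n f) := by
    clear hw
    induction r with
    | zero =>
      have : (mk fun n => ((n : ℝ) + 1) ^ 0 * coeff n f) = f := by ext n; simp
      rwa [this]
    | succ r ih =>
      refine (congrArg (Dom (N + 2 * (r + 1))) ?_).mp ih.succ_weight
      ext n
      simp only [coeff_mk]
      ring
  obtain ⟨K, hK, hk⟩ := key
  refine ⟨K, hK, fun n => le_trans ?_ (hk n)⟩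
  rw [coeff_mk, coeff_mk, abs_mul, abs_mul, abs_of_nonneg (by positivity : 0 ≤ ((n : ℝ) + 1) ^ r)]
  exact mul_le_mul_of_nonneg_right (hw n) (abs_nonneg _)

lemma Dom.choose_weight {N : ℕ} {f : ℝ⟦X⟧} (h : Dom N f) (l r : ℕ) :
    Dom (N + 2 * r) (mk fun n => (Nat.choose (n + 1 - l) r : ℝ) * coeff n f) := by
  refine h.weight r _ fun n => ?_
  rw [abs_of_nonneg (by positivity)]
  have h1 : (n + 1 - l).choose r ≤ (n + 1) ^ r :=
    (Nat.choose_le_choose r (by omega)).trans (Nat.choose_le_pow _ _)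
  exact_mod_cast h1

/-- For `l = 0` the weight of degree `p + 1` costs only `2 * p + 1`: one factor `n + 1` turns the
Catalan numbers into the central binomial coefficients. -/
lemma dom_choose_zero (p : ℕ) :
    Dom (2 * p + 1)
      (mk fun n => (Nat.choose (n + 1 - 0) (p + 1) : ℝ) * coeff n (defectSeries 0)) := by
  have h := (Dom.cb_pow 1).weight p
    (fun n => (Nat.choose (n + 1) (p + 1) : ℝ) / (n + 1)) (fun n => by
      rw [abs_of_nonneg (by positivity), div_le_iff₀ (by positivity), ← pow_succ]
      exact_mod_cast Nat.choose_le_pow (n + 1) (p + 1))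
  convert h using 1
  · ring
  · ext n
    rw [coeff_mk, coeff_mk, pow_one, coeff_cb, coeff_defectSeries, defect_zero_left,
      ← succ_mul_catalan_eq_centralBinom, Nat.sub_zero]
    push_cast
    field_simp

/-! ### Leading singular term of the generating functions -/

/-- The coefficient of the leading singular term `(1 - 4X)^(-(2q+1)/2)` of
`defectSeries (q + 1)`. -/
noncomputable def lead (q : ℕ) : ℝ := catalan q / (2 * 8 ^ q)

/-- The Catalan recursion for `lead`; the factor `1 / 4` is the value of `X` at the singularity. -/
lemma lead_succ (p : ℕ) :
    (∑ x ∈ Finset.HasAntidiagonal.antidiagonal p, lead x.1 * lead x.2) * (1 / 4) = lead (p + 1) := by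
  have h : ∀ x ∈ Finset.HasAntidiagonal.antidiagonal p, lead x.1 * lead x.2
      = ((catalan x.1 * catalan x.2 : ℕ) : ℝ) * (1 / (4 * 8 ^ p)) := by
    intro x hx
    rw [Finset.HasAntidiagonal.mem_antidiagonal] at hx
    rw [← hx, lead, lead, pow_add]
    push_cast
    field_simp
    ring
  rw [Finset.sum_congr rfl h, ← Finset.sum_mul, ← Nat.cast_sum, ← catalan_succ', lead, pow_succ]
  field_simp
  ring

lemma defectSeries_one :
    defectSeries 1 = PowerSeries.C (lead 0) * cb ^ 1 + PowerSeries.C (-1 / 2 : ℝ) := by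
  have h := defectSeries_eq 1
  have h1 : (mk fun n => (Nat.choose (n + 1 - 0) (1 - 1 - 0) : ℝ) * coeff n (defectSeries 0))
      = defectSeries 0 := by ext n; simp
  simp only [Finset.range_one, Finset.sum_singleton, h1, Finset.Nat.antidiagonal_succ,
    Finset.Nat.antidiagonal_zero, Finset.map_singleton, Finset.sum_cons, one_ne_zero, if_false] at h
  simp at h
  have hl : (PowerSeries.C (lead 0) : ℝ⟦X⟧) * 2 = 1 := by
    rw [← map_ofNat (PowerSeries.C (R := ℝ)) 2, ← map_mul]
    norm_num [lead]
  have hn : (PowerSeries.C (-1 / 2 : ℝ) : ℝ⟦X⟧) = - PowerSeries.C (lead 0) := by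
    rw [← map_neg]; norm_num [lead]
  rw [hn]
  set a := (PowerSeries.C (lead 0) : ℝ⟦X⟧)
  set D := defectSeries 0
  linear_combination cb * h - (defectSeries 1 + a) * sqrt_mul_cb - X * D * cb * hl

/-- `defectSeries (p + 2)` solved for, using that `1 - 2 X D₀` is inverse to `cb`. -/
lemma defectSeries_add_two (p : ℕ) : defectSeries (p + 2) =
    X * (cb * ∑ l ∈ Finset.range (p + 2),
        mk (fun n => (Nat.choose (n + 1 - l) (p + 1 - l) : ℝ) * coeff n (defectSeries l)))
    + X * (cb * ∑ x ∈ Finset.HasAntidiagonal.antidiagonal p,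
        defectSeries (x.1 + 1) * defectSeries (x.2 + 1)) := by
  have h := defectSeries_eq (p + 2)
  rw [Finset.Nat.antidiagonal_succ_succ'] at h
  simp only [Finset.sum_cons, Finset.sum_map, Function.Embedding.prodMap, Prod.map,
    Function.Embedding.coeFn_mk, Nat.succ_eq_add_one] at h
  simp only [show p + 2 - 1 = p + 1 by omega, if_neg (show p + 2 ≠ 0 by omega)] at h
  linear_combination cb * h - (defectSeries (p + 2)) * sqrt_mul_cb

/-- Up to coefficients dominated by `(1 - 4X)^(-q)`, `defectSeries (q + 1)` equals its leading
singular term. -/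
lemma defectSeries_main (q : ℕ) :
    Dom (2 * q) (defectSeries (q + 1) - PowerSeries.C (lead q) * cb ^ (2 * q + 1)) := by
  induction q using Nat.strong_induction_on with
  | _ q ih =>
    have hD : ∀ j < q, Dom (2 * j + 1) (defectSeries (j + 1)) := by
      intro j hj
      have := (ih j hj).succ.add ((Dom.cb_pow (2 * j + 1)).C_mul (lead j))
      simpa using this
    rcases q with _ | p
    · rw [defectSeries_one]
      simpa using Dom.C (-1 / 2)
    · have hL : Dom (2 * p + 2) (X * (cb * ∑ l ∈ Finset.range (p + 2),
          mk (fun n => (Nat.choose (n + 1 - l) (p + 1 - l) : ℝ)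
            * coeff n (defectSeries l)))) := by
        refine Dom.X_mul ?_
        rw [show 2 * p + 1 + 1 = 1 + (2 * p + 1) by ring]
        refine Dom.mul (by simpa using Dom.cb_pow 1) (Dom.sum _ _ fun l hl => ?_)
        rw [Finset.mem_range] at hl
        rcases l with _ | j
        · exact dom_choose_zero p
        · have := (hD j (by omega)).choose_weight (j + 1) (p + 1 - (j + 1))
          rwa [show 2 * j + 1 + 2 * (p + 1 - (j + 1)) = 2 * p + 1 by omega] at this
      have hQ : Dom (2 * p + 2) (X * (cb * ∑ x ∈ Finset.HasAntidiagonal.antidiagonal p,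
          (defectSeries (x.1 + 1) * defectSeries (x.2 + 1)
            - PowerSeries.C (lead x.1 * lead x.2) * cb ^ (2 * p + 2)))) := by
        refine Dom.X_mul ?_
        rw [Nat.add_comm (2 * p + 1) 1]
        refine Dom.mul (by simpa using Dom.cb_pow 1) (Dom.sum _ _ fun x hx => ?_)
        rw [Finset.HasAntidiagonal.mem_antidiagonal] at hx
        have h1 := (ih x.1 (by omega)).mul (hD x.2 (by omega))
        have h2 := ((Dom.cb_pow (2 * x.1 + 1)).C_mul (lead x.1)).mul (ih x.2 (by omega))
        rw [show 2 * x.1 + (2 * x.2 + 1) = 2 * p + 1 by omega] at h1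
        rw [show 2 * x.1 + 1 + (2 * x.2) = 2 * p + 1 by omega] at h2
        convert h1.add h2 using 1
        rw [show 1 + (2 * p + 1) = (2 * x.1 + 1) + (2 * x.2 + 1) by omega, pow_add, map_mul]
        ring
      have hS : ∑ x ∈ Finset.HasAntidiagonal.antidiagonal p,
          (defectSeries (x.1 + 1) * defectSeries (x.2 + 1)
            - PowerSeries.C (lead x.1 * lead x.2) * cb ^ (2 * p + 2))
          = ∑ x ∈ Finset.HasAntidiagonal.antidiagonal p, defectSeries (x.1 + 1) * defectSeries (x.2 + 1)
            - PowerSeries.C (∑ x ∈ Finset.HasAntidiagonal.antidiagonal p, lead x.1 * lead x.2)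
              * cb ^ (2 * p + 2) := by
        rw [Finset.sum_sub_distrib, map_sum, Finset.sum_mul]
      rw [hS] at hQ
      -- in `X * cb^(2p+3) = (cb^(2p+3) - cb^(2p+1)) / 4` the second term is of lower order
      have hE := ((Dom.cb_pow (2 * p + 1)).succ.C_mul (-1 / 4)).C_mul
        (∑ x ∈ Finset.HasAntidiagonal.antidiagonal p, lead x.1 * lead x.2)
      have hx := X_mul_cb_pow (2 * p + 1)
      rw [show 2 * (p + 1) = 2 * p + 2 by ring]
      convert (hL.add hQ).add hE using 1
      rw [show p + 1 + 1 = p + 2 by rfl, defectSeries_add_two, ← lead_succ, map_mul]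
      set E := (PowerSeries.C (∑ x ∈ Finset.HasAntidiagonal.antidiagonal p, lead x.1 * lead x.2) : ℝ⟦X⟧)
      linear_combination E * hx

/-! ### Coefficient asymptotics -/

/-- The squared sequence is `n / (2n+1)` divided by the Wallis product, which tends to `π / 2`. -/
lemma tendsto_centralBinom :
    Tendsto (fun n : ℕ => (Nat.centralBinom n : ℝ) * √n / 4 ^ n) atTop (nhds (1 / √Real.pi)) := by
  have h1 : Tendsto (fun n : ℕ => √((n : ℝ) / (2 * n + 1) / Real.Wallis.W n)) atTop
      (nhds (√(1 / 2 / (Real.pi / 2)))) :=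
    (Stirling.tendsto_self_div_two_mul_self_add_one.div
      Real.Wallis.tendsto_W_nhds_pi_div_two (by positivity)).sqrt
  have h2 : √(1 / 2 / (Real.pi / 2)) = 1 / √Real.pi := by
    rw [show 1 / 2 / (Real.pi / 2) = 1 / Real.pi by field_simp, Real.sqrt_div zero_le_one,
      Real.sqrt_one]
  rw [h2] at h1
  refine h1.congr fun n => ?_
  have h3 : (Nat.centralBinom n : ℝ) * (n.factorial : ℝ) ^ 2 = ((2 * n).factorial : ℝ) := by
    have := Nat.choose_mul_factorial_mul_factorial (show n ≤ 2 * n by omega)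
    rw [show 2 * n - n = n by omega, ← Nat.centralBinom_eq_two_mul_choose] at this
    rw [← this]
    push_cast
    ring
  have h4 : (n : ℝ) / (2 * n + 1) / Real.Wallis.W n
      = ((Nat.centralBinom n : ℝ) * √n / 4 ^ n) ^ 2 := by
    have h5 : ((Nat.centralBinom n : ℝ) * √n / 4 ^ n) ^ 2
        = (Nat.centralBinom n : ℝ) ^ 2 * n / 16 ^ n := by
      rw [div_pow, mul_pow, Real.sq_sqrt n.cast_nonneg, pow_right_comm]
      norm_num
    rw [h5, Real.Wallis.W_eq_factorial_ratio, ← h3, pow_mul]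
    have : (Nat.centralBinom n : ℝ) ≠ 0 := by exact_mod_cast Nat.centralBinom_ne_zero n
    norm_num
    field_simp
  rw [h4, Real.sqrt_sq (by positivity)]

/-- The `n`-th coefficient of `(1 - 4X)^(-N/2)`, normalised by its order `4 ^ n * n ^ (N / 2 - 1)`
(with `√n ^ N / n` in place of a real power). -/
noncomputable def normCoeff (N n : ℕ) : ℝ := coeff n (cb ^ N) * n / (4 ^ n * √n ^ N)

/-- One step of `(cb ^ N)' = 2 N cb ^ (N + 2)` on the level of coefficient asymptotics. -/
lemma tendsto_normCoeff_add_two {N : ℕ} (hN : N ≠ 0) {a : ℝ}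
    (h : Tendsto (normCoeff N) atTop (nhds a)) :
    Tendsto (normCoeff (N + 2)) atTop (nhds (a * (2 / N))) := by
  have h1 : Tendsto (fun n : ℕ => √(1 + 1 / (n : ℝ))) atTop (nhds 1) := by
    have := (tendsto_one_div_atTop_nhds_zero_nat (𝕜 := ℝ)).const_add 1
    simpa using this.sqrt
  have h2 := (((tendsto_add_atTop_iff_nat 1).mpr h).mul_const (2 / (N : ℝ))).mul (h1.pow N)
  rw [one_pow, mul_one] at h2
  refine h2.congr' ?_
  filter_upwards [eventually_gt_atTop 0] with n hn
  have hn' : (0 : ℝ) < n := by exact_mod_cast hn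
  have hN' : (N : ℝ) ≠ 0 := by exact_mod_cast hN
  have h3 : √(1 + 1 / (n : ℝ)) = √((n : ℝ) + 1) / √n := by
    rw [← Real.sqrt_div (by positivity)]
    congr 1
    field_simp
  have h4 : coeff n (cb ^ (N + 2)) = ((n : ℝ) + 1) * coeff (n + 1) (cb ^ N) / (2 * N) := by
    rw [coeff_succ_cb_pow]
    field_simp
  have h5 : √(n : ℝ) ^ 2 = n := Real.sq_sqrt hn'.le
  have h6 : 0 < √((n : ℝ) + 1) := by positivity
  have h7 : 0 < √(n : ℝ) := by positivity
  rw [normCoeff, normCoeff, h3, h4, pow_add _ N 2, h5]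
  push_cast
  rw [div_pow, pow_succ (4 : ℝ) n]
  field_simp
  ring

lemma exists_tendsto_normCoeff_even (m : ℕ) :
    ∃ a, Tendsto (normCoeff (2 * m)) atTop (nhds a) := by
  rcases m with _ | m
  · refine ⟨0, tendsto_const_nhds.congr' ?_⟩
    filter_upwards [eventually_gt_atTop 0] with n hn
    simp [normCoeff, coeff_one, hn.ne']
  · induction m with
    | zero =>
      have hc : ∀ n, coeff n (cb ^ 2) = 4 ^ n := by
        intro n
        have h := four_X_mul_cb_pow 0
        have h' : cb ^ 2 = PowerSeries.C (4 : ℝ) * (X * cb ^ 2) + 1 := by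
          rw [map_ofNat]
          linear_combination -h
        induction n with
        | zero => rw [coeff_zero_eq_constantCoeff_apply, h']; simp
        | succ n ih =>
          rw [h', map_add, coeff_C_mul, coeff_succ_X_mul, ih, coeff_one, if_neg (by omega)]
          ring
      refine ⟨1, tendsto_const_nhds.congr' ?_⟩
      filter_upwards [eventually_gt_atTop 0] with n hn
      have hn' : (0 : ℝ) < n := by exact_mod_cast hn
      rw [normCoeff, show 2 * (0 + 1) = 2 by rfl, hc, Real.sq_sqrt hn'.le, div_self (by positivity)]
    | succ m ih =>
      obtain ⟨a, ha⟩ := ih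
      exact ⟨_, tendsto_normCoeff_add_two (N := 2 * (m + 1)) (by omega) ha⟩

/-- The limit is `1 / Γ(q + 1/2)`, written so that it matches `lead q`. -/
lemma tendsto_normCoeff_odd (q : ℕ) : Tendsto (normCoeff (2 * q + 1)) atTop
    (nhds (1 / (2 ^ (q + 1) * ((q + 1).factorial : ℝ) * √Real.pi) / lead q)) := by
  induction q with
  | zero =>
    have h : 1 / (2 ^ (0 + 1) * ((0 + 1).factorial : ℝ) * √Real.pi) / lead 0 = 1 / √Real.pi := by
      simp [lead]
    rw [h]
    refine tendsto_centralBinom.congr' ?_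
    filter_upwards [eventually_gt_atTop 0] with n hn
    have hn' : (0 : ℝ) < n := by exact_mod_cast hn
    have h5 : √(n : ℝ) * √n = n := Real.mul_self_sqrt hn'.le
    have h7 : 0 < √(n : ℝ) := by positivity
    rw [normCoeff, show 2 * 0 + 1 = 1 by rfl, pow_one, pow_one, coeff_cb,
      div_eq_div_iff (by positivity) (by positivity)]
    linear_combination (Nat.centralBinom n : ℝ) * 4 ^ n * h5
  | succ q ih =>
    refine (congrArg (fun x => Tendsto (normCoeff (2 * q + 1 + 2)) atTop (nhds x)) ?_).mp
      (tendsto_normCoeff_add_two (by omega) ih)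
    have hc : ((q : ℝ) + 2) * catalan (q + 1) = 2 * (2 * q + 1) * catalan q := by
      have h1 := succ_mul_catalan_eq_centralBinom q
      have h2 := succ_mul_catalan_eq_centralBinom (q + 1)
      have h3 := Nat.succ_mul_centralBinom_succ q
      rw [← h1, ← h2] at h3
      have h4 : ((q : ℝ) + 1) * (((q : ℝ) + 1 + 1) * catalan (q + 1))
          = 2 * (2 * q + 1) * ((q + 1) * catalan q) := by exact_mod_cast h3
      have h5 : (q : ℝ) + 1 ≠ 0 := by positivity
      apply mul_left_cancel₀ h5
      linear_combination h4
    have hp : ∀ j : ℕ, (0 : ℝ) < catalan j := by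
      intro j
      have h1 := succ_mul_catalan_eq_centralBinom j
      have h2 := Nat.centralBinom_pos j
      rw [← h1] at h2
      exact_mod_cast Nat.pos_of_mul_pos_left h2
    have hp1 := hp q
    have hp2 := hp (q + 1)
    have : (catalan q : ℝ) = ((q : ℝ) + 2) * catalan (q + 1) / (2 * (2 * q + 1)) := by
      rw [hc]; field_simp
    rw [lead, lead, this, Nat.factorial_succ (q + 1)]
    push_cast
    field_simp
    ring

lemma tendsto_defect_succ (q : ℕ) :
    Tendsto (fun n : ℕ => (defect (q + 1) n : ℝ) * n / (4 ^ n * √n ^ (2 * q + 1))) atTop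
      (nhds (1 / (2 ^ (q + 1) * ((q + 1).factorial : ℝ) * √Real.pi))) := by
  obtain ⟨K, hK, hd⟩ := defectSeries_main q
  obtain ⟨a, ha⟩ := exists_tendsto_normCoeff_even q
  have hlead : lead q ≠ 0 := by
    have h1 := succ_mul_catalan_eq_centralBinom q
    have h2 := Nat.centralBinom_pos q
    rw [← h1] at h2
    have : (0 : ℝ) < catalan q := by exact_mod_cast Nat.pos_of_mul_pos_left h2
    unfold lead
    positivity
  have hmain := (tendsto_normCoeff_odd q).const_mul (lead q)
  rw [mul_div_cancel₀ _ hlead] at hmain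
  have hinv : Tendsto (fun n : ℕ => (√(n : ℝ))⁻¹) atTop (nhds 0) :=
    tendsto_inv_atTop_zero.comp (Real.tendsto_sqrt_atTop.comp tendsto_natCast_atTop_atTop)
  have hbound := (ha.const_mul K).mul hinv
  rw [mul_zero] at hbound
  -- the part of lower singular order is smaller by a factor of order `n ^ (-1/2)`
  have herr : Tendsto (fun n : ℕ => ((defect (q + 1) n : ℝ) - lead q * coeff n (cb ^ (2 * q + 1)))
      * n / (4 ^ n * √n ^ (2 * q + 1))) atTop (nhds 0) := by
    refine squeeze_zero_norm (fun n => ?_) hbound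
    have h := hd n
    rw [map_sub, coeff_defectSeries, coeff_C_mul] at h
    rw [Real.norm_eq_abs, abs_div, abs_mul, abs_of_nonneg (n.cast_nonneg : (0 : ℝ) ≤ n),
      abs_of_nonneg (by positivity : (0 : ℝ) ≤ 4 ^ n * √n ^ (2 * q + 1))]
    have : K * normCoeff (2 * q) n * (√(n : ℝ))⁻¹
        = K * coeff n (cb ^ (2 * q)) * n / (4 ^ n * √n ^ (2 * q + 1)) := by
      rw [normCoeff, pow_succ (√(n : ℝ)) (2 * q), ← mul_assoc (4 ^ n : ℝ), ← div_div]
      ring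
    rw [this]
    gcongr
  have hsum := hmain.add herr
  rw [add_zero] at hsum
  refine hsum.congr fun n => ?_
  rw [normCoeff]
  ring

/-- The asymptotics by number of missing holes, with a real power. -/
lemma tendsto_defect (m : ℕ) :
    Tendsto (fun n : ℕ => (defect m n : ℝ) / (4 ^ n * (n : ℝ) ^ ((2 * (m : ℝ) - 3) / 2))) atTop
      (nhds (1 / (2 ^ m * (m.factorial : ℝ) * √Real.pi))) := by
  rcases m with _ | q
  · have h1 : Tendsto (fun n : ℕ => (n : ℝ) / (n + 1)) atTop (nhds 1) :=
      tendsto_natCast_div_add_atTop 1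
    have h2 := tendsto_centralBinom.mul h1
    simp only [mul_one] at h2
    simp only [pow_zero, Nat.factorial_zero, Nat.cast_one, one_mul]
    refine h2.congr' ?_
    filter_upwards [eventually_gt_atTop 0] with n hn
    have hn' : (0 : ℝ) < n := by exact_mod_cast hn
    have hr : (n : ℝ) ^ ((2 * ((0 : ℕ) : ℝ) - 3) / 2) = (√n * n)⁻¹ := by
      rw [show (2 * ((0 : ℕ) : ℝ) - 3) / 2 = -(1 / 2 + 1) by norm_num, Real.rpow_neg hn'.le,
        Real.rpow_add hn', Real.rpow_one, Real.sqrt_eq_rpow]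
    rw [hr, defect_zero_left, ← succ_mul_catalan_eq_centralBinom]
    have : 0 < √(n : ℝ) := by positivity
    push_cast
    field_simp
  · refine (tendsto_defect_succ q).congr' ?_
    filter_upwards [eventually_gt_atTop 0] with n hn
    have hn' : (0 : ℝ) < n := by exact_mod_cast hn
    have hr : (n : ℝ) ^ ((2 * ((q + 1 : ℕ) : ℝ) - 3) / 2) = √n ^ (2 * q + 1) / n := by
      rw [Real.sqrt_eq_rpow, ← Real.rpow_natCast, ← Real.rpow_mul hn'.le]
      nth_rewrite 3 [← Real.rpow_one (n : ℝ)]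
      rw [← Real.rpow_sub hn']
      congr 1
      push_cast
      ring
    rw [hr]
    field_simp


/-- For fixed `k ≥ 1`, `c(n, n+2-k) ~ 4^n n^((2k-5)/2) / (2^(k-1) (k-1)! √π)`,
i.e. the ratio of the two sides tends to `1` as `n → ∞`. -/
theorem c_asymptotic (k : ℕ) (hk : 1 ≤ k) :
    Tendsto
      (fun n : ℕ => (c n (n+2-k) : ℝ) /
        (4^n * (n:ℝ) ^ ((2*(k:ℝ) - 5)/2)
          / (2^(k-1) * (Nat.factorial (k-1) : ℝ) * Real.sqrt Real.pi)))
      atTop (nhds 1) := by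
  obtain ⟨m, rfl⟩ : ∃ m, k = m + 1 := ⟨k - 1, by omega⟩
  have hpos : (0 : ℝ) < 2 ^ m * (m.factorial : ℝ) * √Real.pi := by positivity
  have h := (tendsto_defect m).mul_const (2 ^ m * (m.factorial : ℝ) * √Real.pi)
  rw [one_div_mul_cancel hpos.ne'] at h
  refine h.congr' ?_
  filter_upwards [eventually_ge_atTop m] with n hn
  have hc : c n (n + 2 - (m + 1)) = defect m n := by
    rw [c_eq_defect (by omega)]
    congr 1
    omega
  rw [hc, Nat.add_sub_cancel, div_div_eq_mul_div]
  push_cast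
  rw [show (2 * ((m : ℝ) + 1) - 5) / 2 = (2 * (m : ℝ) - 3) / 2 by ring]
  ring
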